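/- arXiv:1803.09687 — 2 statements merged into one kernel-verified Lean document; each statement's English description precedes it below -/
import Mathlib

section
/- Let K ∈ ℝ, N ∈ (1,∞), let I ⊆ ℝ be an open interval, and let h : I → (0,∞) be a CD(K,N) density on I. Then the set D ⊆ I of points where h is differentiable has at-most-countable complement in I, and for all x, y ∈ D with x < y the following integrated Riccati (Bochner-type) inequality holds: (log h)′(x) − (log h)′(y) ≥ K·(y − x) + (1/(N−1))·∫_x^y ((log h)′(s))² ds, where (log h)′ = h′/h is defined a.e. on I and the integral is finite. -/
open Real MeasureTheory ENNReal

/-- The finite part of the distortion coefficient `σ_{K,N}^{(t)}(θ)`. -/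
noncomputable def sigmaR (K N t θ : ℝ) : ℝ :=
  if 0 < K * θ ^ 2 then
    Real.sin (t * θ * Real.sqrt (K / N)) / Real.sin (θ * Real.sqrt (K / N))
  else if K * θ ^ 2 = 0 ∨ N = 0 then t
  else Real.sinh (t * θ * Real.sqrt (-K / N)) / Real.sinh (θ * Real.sqrt (-K / N))

/-- The distortion coefficient `σ_{K,N}^{(t)}(θ)`, with value `+∞` when `K·θ² ≥ N·π²`. -/
noncomputable def sigmaE (K N t θ : ℝ) : ℝ≥0∞ :=
  if N * Real.pi ^ 2 ≤ K * θ ^ 2 then ⊤ else ENNReal.ofReal (sigmaR K N t θ)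

/-- `h` is a `CD(K,N)` density on the interval `I ⊆ ℝ`: `h` is nonnegative on `I` and
`h((1−t)x₀ + t x₁)^{1/(N−1)} ≥ σ_{K,N−1}^{(1−t)}(|x₁−x₀|)·h(x₀)^{1/(N−1)} +
σ_{K,N−1}^{(t)}(|x₁−x₀|)·h(x₁)^{1/(N−1)}` for all `x₀, x₁ ∈ I`, `t ∈ [0,1]`.
The inequality is formulated in `ℝ≥0∞` so that an infinite coefficient forces the
corresponding density value to vanish. -/
def IsCDDensity (K N : ℝ) (I : Set ℝ) (h : ℝ → ℝ) : Prop :=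
  (∀ x ∈ I, 0 ≤ h x) ∧
  ∀ x₀ ∈ I, ∀ x₁ ∈ I, ∀ t ∈ Set.Icc (0:ℝ) 1,
    sigmaE K (N - 1) (1 - t) |x₁ - x₀| * ENNReal.ofReal (h x₀ ^ (1 / (N - 1)))
      + sigmaE K (N - 1) t |x₁ - x₀| * ENNReal.ofReal (h x₁ ^ (1 / (N - 1)))
      ≤ ENNReal.ofReal (h ((1 - t) * x₀ + t * x₁) ^ (1 / (N - 1)))

open Set Filter Topology

/-!
Put `n = N - 1` and `κ = K / n`. The CD condition says that `f = h ^ (1 / n)` satisfies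
`f'' + κ f ≤ 0` in the three-point sense, so at every `s` some solution of the Jacobi equation
`y'' + κ y = 0` touches the graph of `f` from above; let `g s` be its logarithmic derivative at `s`.

* Adding `κ x² / 2` to the logarithm of a positive Jacobi function makes it concave. Hence
  `g x + κ x` is a supergradient of `log f + κ x² / 2`: it is antitone, and `f` is differentiable,
  with `f' / f = g`, wherever it is continuous.
* Comparing the Jacobi functions touching at `a < b` bounds `g b` by the solution at time `b - a` of
  the Riccati equation `w' = -κ - w²` with `w 0 = g a`. Hence `g' ≤ -κ - g²` wherever `g` is
  differentiable.

Since a monotone function increases by at least the integral of its derivative, integrating the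
latter inequality and multiplying by `n` yields the claim for `(log h)' = n g`.
-/

/-! ### Supergradients -/

/-- `q` selects a supergradient of `V` at every point of `I`: the line of slope `q s` through
`(s, V s)` lies above the graph of `V` over `I`. -/
def IsSupergradientOn (V q : ℝ → ℝ) (I : Set ℝ) : Prop :=
  ∀ s ∈ I, ∀ b ∈ I, V b ≤ V s + q s * (b - s)

namespace IsSupergradientOn

variable {V q : ℝ → ℝ} {I : Set ℝ} {s v : ℝ}

theorem const_mul (hq : IsSupergradientOn V q I) {c : ℝ} (hc : 0 ≤ c) :
    IsSupergradientOn (fun x => c * V x) (fun x => c * q x) I := by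
  intro s hs b hb
  linarith [mul_le_mul_of_nonneg_left (hq s hs b hb) hc]

theorem antitoneOn (hq : IsSupergradientOn V q I) : AntitoneOn q I := by
  intro a ha b hb hab
  rcases hab.eq_or_lt with rfl | hab
  · exact le_rfl
  · nlinarith [hq a ha b hb, hq b hb a ha]

theorem abs_slope_sub_le (hq : IsSupergradientOn V q I) (hs : s ∈ I) {b : ℝ} (hb : b ∈ I)
    (hbs : b ≠ s) : |slope V s b - q s| ≤ |q b - q s| := by
  have upper : V b - V s ≤ q s * (b - s) := by linarith [hq s hs b hb]
  have lower : q b * (b - s) ≤ V b - V s := by linarith [hq b hb s hs]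
  rw [slope_def_field]
  rcases hbs.lt_or_gt with hlt | hgt
  · have hneg : b - s < 0 := sub_neg.2 hlt
    have h₁ : q s ≤ (V b - V s) / (b - s) := (le_div_iff_of_neg hneg).2 upper
    have h₂ : (V b - V s) / (b - s) ≤ q b := (div_le_iff_of_neg hneg).2 lower
    exact abs_le_abs_of_nonneg (by linarith) (by linarith)
  · have hpos : 0 < b - s := sub_pos.2 hgt
    have h₁ : (V b - V s) / (b - s) ≤ q s := (div_le_iff₀ hpos).2 upper
    have h₂ : q b ≤ (V b - V s) / (b - s) := (le_div_iff₀ hpos).2 lower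
    exact abs_le_abs_of_nonpos (by linarith) (by linarith)

theorem hasDerivAt_of_continuousAt (hq : IsSupergradientOn V q I) (hs : I ∈ 𝓝 s)
    (hc : ContinuousAt q s) : HasDerivAt V (q s) s := by
  rw [hasDerivAt_iff_tendsto_slope, tendsto_iff_norm_sub_tendsto_zero]
  have hlim : Tendsto (fun b => ‖q b - q s‖) (𝓝[≠] s) (𝓝 0) :=
    (tendsto_iff_norm_sub_tendsto_zero.1 hc.tendsto).mono_left nhdsWithin_le_nhds
  refine squeeze_zero' (Eventually.of_forall fun _ => norm_nonneg _) ?_ hlim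
  filter_upwards [self_mem_nhdsWithin, mem_nhdsWithin_of_mem_nhds hs] with b hbs hb
  exact hq.abs_slope_sub_le (mem_of_mem_nhds hs) hb hbs

theorem eq_of_hasDerivAt (hq : IsSupergradientOn V q I) (hs : I ∈ 𝓝 s)
    (hV : HasDerivAt V v s) : v = q s := by
  have hmax : IsLocalMax (fun b => V b - q s * b) s := by
    filter_upwards [hs] with b hb
    linarith [hq s (mem_of_mem_nhds hs) b hb]
  have hderiv : HasDerivAt (fun b => V b - q s * b) (v - q s) s := by
    simpa using hV.fun_sub ((hasDerivAt_id s).const_mul (q s))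
  exact sub_eq_zero.1 (hmax.hasDerivAt_eq_zero hderiv)

theorem countable_not_differentiableAt (hq : IsSupergradientOn V q I) (hI : IsOpen I) :
    (I \ {x | DifferentiableAt ℝ V x}).Countable := by
  refine hq.antitoneOn.countable_not_continuousWithinAt.mono ?_
  rintro x ⟨hx, hV⟩
  have hxI : I ∈ 𝓝 x := hI.mem_nhds hx
  exact ⟨hx, fun hc =>
    hV (hq.hasDerivAt_of_continuousAt hxI (hc.continuousAt hxI)).differentiableAt⟩

end IsSupergradientOn

/-! ### Differential inequalities -/

theorem hasDerivAt_half_mul_sq (c x : ℝ) : HasDerivAt (fun x => c / 2 * x ^ 2) (c * x) x := by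
  refine ((hasDerivAt_pow 2 x).const_mul (c / 2)).congr_deriv ?_
  simp only [Nat.cast_ofNat, Nat.add_one_sub_one, pow_one]
  ring

theorem le_of_hasDerivAt_of_eventually_le_right {φ ψ : ℝ → ℝ} {φ' ψ' a : ℝ}
    (hφ : HasDerivAt φ φ' a) (hψ : HasDerivAt ψ ψ' a) (heq : φ a = ψ a)
    (hle : ∀ᶠ b in 𝓝[>] a, φ b ≤ ψ b) : φ' ≤ ψ' := by
  refine le_of_tendsto_of_tendsto (hasDerivAt_iff_tendsto_slope_left_right.1 hφ).2
    (hasDerivAt_iff_tendsto_slope_left_right.1 hψ).2 ?_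
  filter_upwards [hle, self_mem_nhdsWithin] with b hb hab
  rw [slope_def_field, slope_def_field, heq]
  exact div_le_div_of_nonneg_right (by linarith) (sub_pos.2 hab).le

section Integration

variable {q G : ℝ → ℝ} {x y : ℝ}

theorem ae_restrict_le_neg_deriv (hxy : x ≤ y) (hq : AntitoneOn q (Icc x y))
    (hle : ∀ s ∈ Ioo x y, DifferentiableAt ℝ q s → G s ≤ -deriv q s) :
    ∀ᵐ s ∂volume.restrict (uIoc x y), G s ≤ -deriv q s := by
  rw [uIoc_of_le hxy, ← restrict_Ioo_eq_restrict_Ioc, ae_restrict_iff' measurableSet_Ioo]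
  have hdiff : ∀ᵐ s, s ∈ Icc x y → DifferentiableWithinAt ℝ (-q) (Icc x y) s :=
    hq.neg.ae_differentiableWithinAt_of_mem
  filter_upwards [hdiff] with s hs hsxy
  have hneg : DifferentiableAt ℝ (-q) s :=
    (hs (Ioo_subset_Icc_self hsxy)).differentiableAt (Icc_mem_nhds hsxy.1 hsxy.2)
  exact hle s hsxy (by simpa using hneg.neg)

theorem intervalIntegrable_and_integral_le_of_le_neg_deriv (hxy : x ≤ y)
    (hq : AntitoneOn q (Icc x y)) (hG : AEStronglyMeasurable G (volume.restrict (uIoc x y)))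
    (hG₀ : 0 ≤ G) (hle : ∀ s ∈ Ioo x y, DifferentiableAt ℝ q s → G s ≤ -deriv q s) :
    IntervalIntegrable G volume x y ∧ ∫ s in x..y, G s ≤ q x - q y := by
  have hmono : MonotoneOn (-q) (uIcc x y) := by rw [uIcc_of_le hxy]; exact hq.neg
  have hae : ∀ᵐ s ∂volume.restrict (uIoc x y), G s ≤ deriv (-q) s := by
    simpa only [deriv.neg] using ae_restrict_le_neg_deriv hxy hq hle
  have hderiv : IntervalIntegrable (deriv (-q)) volume x y := hmono.intervalIntegrable_deriv
  have hint : IntervalIntegrable G volume x y := by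
    refine hderiv.mono_fun hG ?_
    filter_upwards [hae] with s hs
    rw [Real.norm_of_nonneg (hG₀ s)]
    exact hs.trans (le_abs_self _)
  have hends : 0 ≤ (-q) y - (-q) x := by
    simpa using hq (left_mem_Icc.2 hxy) (right_mem_Icc.2 hxy) hxy
  refine ⟨hint, ?_⟩
  calc ∫ s in x..y, G s ≤ ∫ s in x..y, deriv (-q) s := by
        refine intervalIntegral.integral_mono_ae_restrict hxy hint hderiv ?_
        rwa [← restrict_Ioc_eq_restrict_Icc, ← uIoc_of_le hxy]
    _ ≤ (-q) y - (-q) x := by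
        have hmem := hmono.intervalIntegral_deriv_mem_uIcc
        rw [uIcc_of_le hends] at hmem
        exact hmem.2
    _ = q x - q y := by simp only [Pi.neg_apply]; ring

theorem integrated_riccati_of_deriv_le {ρ : ℝ → ℝ} {K c : ℝ} (hc : 0 < c) (hxy : x ≤ y)
    (hρ : AntitoneOn (fun s => ρ s + K * s) (Icc x y))
    (hderiv : ∀ s ∈ Ioo x y, DifferentiableAt ℝ ρ s → deriv ρ s ≤ -K - c * ρ s ^ 2) :
    IntervalIntegrable (fun s => ρ s ^ 2) volume x y ∧
      K * (y - x) + c * ∫ s in x..y, ρ s ^ 2 ≤ ρ x - ρ y := by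
  have hmeas : AEStronglyMeasurable (fun s => c * ρ s ^ 2) (volume.restrict (uIoc x y)) := by
    have hanti : AEMeasurable (fun s => ρ s + K * s) (volume.restrict (uIoc x y)) := by
      rw [uIoc_of_le hxy]
      exact aemeasurable_restrict_of_antitoneOn measurableSet_Ioc (hρ.mono Ioc_subset_Icc_self)
    have hlin : AEMeasurable (fun s => K * s) (volume.restrict (uIoc x y)) := by fun_prop
    have hρm : AEMeasurable ρ (volume.restrict (uIoc x y)) := by
      simpa using hanti.fun_sub hlin
    exact ((hρm.pow_const 2).const_mul c).aestronglyMeasurable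
  have hle : ∀ s ∈ Ioo x y, DifferentiableAt ℝ (fun s => ρ s + K * s) s →
      c * ρ s ^ 2 ≤ -deriv (fun s => ρ s + K * s) s := by
    intro s hs hd
    have hdρ : DifferentiableAt ℝ ρ s := by
      simpa using hd.fun_sub (differentiableAt_id.const_mul K)
    have hsum : deriv (fun s => ρ s + K * s) s = deriv ρ s + K := by
      simpa using (hdρ.hasDerivAt.fun_add ((hasDerivAt_id s).const_mul K)).deriv
    linarith [hderiv s hs hdρ]
  obtain ⟨hint, hbound⟩ := intervalIntegrable_and_integral_le_of_le_neg_deriv hxy hρ hmeas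
    (fun s => by positivity) hle
  rw [intervalIntegral.integral_const_mul] at hbound
  refine ⟨?_, by linarith⟩
  simpa [hc.ne'] using hint.const_mul c⁻¹

end Integration

/-! ### Generalized trigonometric functions -/

/-- The solution of `y'' + κ y = 0` with `y 0 = 0` and `y' 0 = 1`. -/
noncomputable def genSin (κ θ : ℝ) : ℝ :=
  if 0 < κ then sin (√κ * θ) / √κ
  else if κ < 0 then sinh (√(-κ) * θ) / √(-κ)
  else θ

/-- The solution of `y'' + κ y = 0` with `y 0 = 1` and `y' 0 = 0`. -/
noncomputable def genCos (κ θ : ℝ) : ℝ :=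
  if 0 < κ then cos (√κ * θ)
  else if κ < 0 then cosh (√(-κ) * θ)
  else 1

section GenTrig

variable (κ θ : ℝ)

@[simp] theorem genSin_zero : genSin κ 0 = 0 := by simp [genSin]

@[simp] theorem genCos_zero : genCos κ 0 = 1 := by simp [genCos]

@[simp] theorem genSin_neg : genSin κ (-θ) = -genSin κ θ := by
  unfold genSin; split_ifs <;> simp [neg_div]

@[simp] theorem genCos_neg : genCos κ (-θ) = genCos κ θ := by
  unfold genCos; split_ifs <;> simp

theorem genSin_add (η : ℝ) :
    genSin κ (θ + η) = genSin κ θ * genCos κ η + genCos κ θ * genSin κ η := by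
  unfold genSin genCos
  split_ifs
  · rw [mul_add, sin_add]; ring
  · rw [mul_add, sinh_add]; ring
  · ring

theorem genCos_sq_add_mul_genSin_sq : genCos κ θ ^ 2 + κ * genSin κ θ ^ 2 = 1 := by
  unfold genSin genCos
  split_ifs with hpos hneg
  · rw [div_pow, sq_sqrt hpos.le, mul_div_cancel₀ _ hpos.ne', cos_sq_add_sin_sq]
  · rw [div_pow, sq_sqrt (neg_pos.2 hneg).le, mul_div_assoc', div_neg,
      mul_div_cancel_left₀ _ hneg.ne, ← sub_eq_add_neg, cosh_sq_sub_sinh_sq]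
  · simp [le_antisymm (not_lt.1 hpos) (not_lt.1 hneg)]

theorem hasDerivAt_genSin : HasDerivAt (genSin κ) (genCos κ θ) θ := by
  unfold genSin genCos
  split_ifs with hpos hneg
  · simpa [(sqrt_pos.2 hpos).ne'] using (((hasDerivAt_id θ).const_mul √κ).sin).div_const √κ
  · simpa [(sqrt_pos.2 (neg_pos.2 hneg)).ne'] using
      (((hasDerivAt_id θ).const_mul √(-κ)).sinh).div_const √(-κ)
  · exact hasDerivAt_id θ

theorem hasDerivAt_genCos : HasDerivAt (genCos κ) (-κ * genSin κ θ) θ := by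
  unfold genSin genCos
  split_ifs with hpos hneg
  · refine ((hasDerivAt_const_mul √κ).cos).congr_deriv ?_
    rw [mul_div_left_comm, neg_div, div_sqrt]
    ring
  · refine ((hasDerivAt_const_mul √(-κ)).cosh).congr_deriv ?_
    rw [mul_div_left_comm, div_sqrt]
  · simpa [le_antisymm (not_lt.1 hpos) (not_lt.1 hneg)] using hasDerivAt_const θ (1 : ℝ)

variable {κ θ}

theorem genSin_pos (hθ : 0 < θ) (hκ : κ * θ ^ 2 < π ^ 2) : 0 < genSin κ θ := by
  unfold genSin
  split_ifs with hpos hneg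
  · have hsqrt : 0 < √κ := sqrt_pos.2 hpos
    have hlt : √κ * θ < π := by
      refine lt_of_pow_lt_pow_left₀ 2 pi_pos.le ?_
      rwa [mul_pow, sq_sqrt hpos.le]
    exact div_pos (sin_pos_of_pos_of_lt_pi (by positivity) hlt) hsqrt
  · have hsqrt : 0 < √(-κ) := sqrt_pos.2 (neg_pos.2 hneg)
    exact div_pos (sinh_pos_iff.2 (by positivity)) hsqrt
  · exact hθ

end GenTrig

/-! ### Jacobi functions and the Riccati equation -/

/-- The solution of the Jacobi equation `y'' + κ y = 0` with `y 0 = 1` and `y' 0 = g`. -/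
noncomputable def jacobi (κ g θ : ℝ) : ℝ := genCos κ θ + g * genSin κ θ

/-- The logarithmic derivative of `jacobi κ g`, which solves the Riccati equation
`w' = -κ - w ^ 2` with `w 0 = g` as long as `jacobi κ g` does not vanish. -/
noncomputable def riccati (κ g θ : ℝ) : ℝ := (g * genCos κ θ - κ * genSin κ θ) / jacobi κ g θ

section Jacobi

variable {κ g θ : ℝ}

variable (κ g) in
@[simp] theorem jacobi_zero : jacobi κ g 0 = 1 := by simp [jacobi]

variable (κ g) in
@[simp] theorem riccati_zero : riccati κ g 0 = g := by simp [riccati]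

variable (κ g θ) in
theorem hasDerivAt_jacobi : HasDerivAt (jacobi κ g) (g * genCos κ θ - κ * genSin κ θ) θ := by
  refine ((hasDerivAt_genCos κ θ).add ((hasDerivAt_genSin κ θ).const_mul g)).congr_deriv ?_
  ring

theorem hasDerivAt_log_jacobi (hJ : jacobi κ g θ ≠ 0) :
    HasDerivAt (fun τ => log (jacobi κ g τ)) (riccati κ g θ) θ :=
  (hasDerivAt_jacobi κ g θ).log hJ

theorem hasDerivAt_riccati (hJ : jacobi κ g θ ≠ 0) :
    HasDerivAt (riccati κ g) (-κ - riccati κ g θ ^ 2) θ := by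
  have hnum : HasDerivAt (fun τ => g * genCos κ τ - κ * genSin κ τ) (-κ * jacobi κ g θ) θ := by
    refine (((hasDerivAt_genCos κ θ).const_mul g).fun_sub
      ((hasDerivAt_genSin κ θ).const_mul κ)).congr_deriv ?_
    rw [jacobi]; ring
  refine (hnum.fun_div (hasDerivAt_jacobi κ g θ) hJ).congr_deriv ?_
  rw [riccati]
  field_simp

theorem hasDerivAt_log_jacobi_add_quadratic (hJ : jacobi κ g θ ≠ 0) :
    HasDerivAt (fun τ => log (jacobi κ g τ) + κ / 2 * τ ^ 2) (riccati κ g θ + κ * θ) θ :=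
  (hasDerivAt_log_jacobi hJ).fun_add (hasDerivAt_half_mul_sq κ θ)

theorem concaveOn_log_jacobi_add_quadratic {s : Set ℝ} (hs : Convex ℝ s)
    (hJ : ∀ τ ∈ s, jacobi κ g τ ≠ 0) :
    ConcaveOn ℝ s fun τ => log (jacobi κ g τ) + κ / 2 * τ ^ 2 := by
  have hderiv := fun τ hτ => hasDerivAt_log_jacobi_add_quadratic (hJ τ hτ)
  have hderiv₂ : ∀ τ ∈ s, HasDerivAt (fun τ => riccati κ g τ + κ * τ) (-riccati κ g τ ^ 2) τ := by
    intro τ hτ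
    refine ((hasDerivAt_riccati (hJ τ hτ)).fun_add (hasDerivAt_const_mul κ)).congr_deriv ?_
    ring
  exact concaveOn_of_hasDerivWithinAt2_nonpos hs
    (fun τ hτ => (hderiv τ hτ).continuousAt.continuousWithinAt)
    (fun τ hτ => (hderiv τ (interior_subset hτ)).hasDerivWithinAt)
    (fun τ hτ => (hderiv₂ τ (interior_subset hτ)).hasDerivWithinAt)
    (fun τ _ => neg_nonpos.2 (sq_nonneg _))

theorem log_jacobi_le (hpos : ∀ τ ∈ uIcc 0 θ, 0 < jacobi κ g τ) :
    log (jacobi κ g θ) ≤ g * θ - κ / 2 * θ ^ 2 := by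
  have hconcave := concaveOn_log_jacobi_add_quadratic (convex_uIcc 0 θ) fun τ hτ => (hpos τ hτ).ne'
  have htangent : HasDerivAt (fun τ => log (jacobi κ g τ) + κ / 2 * τ ^ 2) g 0 := by
    simpa using hasDerivAt_log_jacobi_add_quadratic (hpos 0 left_mem_uIcc).ne'
  have hzero : log (jacobi κ g 0) + κ / 2 * 0 ^ 2 = 0 := by simp
  rcases lt_trichotomy θ 0 with hθ | rfl | hθ
  · have hslope := hconcave.le_slope_of_hasDerivAt right_mem_uIcc left_mem_uIcc hθ htangent
    rw [slope_def_field, hzero, le_div_iff₀ (sub_pos.2 hθ)] at hslope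
    linarith
  · simp
  · have hslope := hconcave.slope_le_of_hasDerivAt left_mem_uIcc right_mem_uIcc hθ htangent
    rw [slope_def_field, hzero, div_le_iff₀ (sub_pos.2 hθ)] at hslope
    linarith

theorem le_riccati_of_one_le_jacobi_mul_jacobi {g' : ℝ} (hS : 0 < genSin κ θ)
    (hJ : 0 < jacobi κ g θ) (hmul : 1 ≤ jacobi κ g θ * jacobi κ g' (-θ)) :
    g' ≤ riccati κ g θ := by
  rw [riccati, le_div_iff₀ hJ]
  refine le_of_mul_le_mul_left ?_ hS
  simp only [jacobi, genSin_neg, genCos_neg] at hmul ⊢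
  linarith [genCos_sq_add_mul_genSin_sq κ θ]

end Jacobi

/-! ### Functions concave with respect to the Jacobi equation -/

/-- `f` satisfies `f'' + κ f ≤ 0` on `I` in the three-point sense, with `I` so short
that `genSin κ` is positive on the distances between its points. -/
structure IsJacobiConcaveOn (κ : ℝ) (I : Set ℝ) (f : ℝ → ℝ) : Prop where
  genSin_sub_pos : ∀ a ∈ I, ∀ b ∈ I, a < b → 0 < genSin κ (b - a)
  le_of_mem_Ioo : ∀ a ∈ I, ∀ b ∈ I, ∀ x ∈ Ioo a b,
    genSin κ (b - x) * f a + genSin κ (x - a) * f b ≤ genSin κ (b - a) * f x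

/-- For a positive `f`, the numbers `g s` are logarithmic superslopes of `f` on `I` relative to the
Jacobi equation: the Jacobi function with value `f s` and slope `f s * g s` at `s` lies above `f`
over `I`. -/
def IsJacobiSlopeOn (κ : ℝ) (f g : ℝ → ℝ) (I : Set ℝ) : Prop :=
  ∀ s ∈ I, ∀ b ∈ I, f b ≤ f s * jacobi κ (g s) (b - s)

section JacobiConcave

variable {κ : ℝ} {I : Set ℝ} {f g : ℝ → ℝ}

namespace IsJacobiConcaveOn

theorem genSin_quotient_le (hf : IsJacobiConcaveOn κ I f) {a s b : ℝ} (ha : a ∈ I) (hs : s ∈ I)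
    (hb : b ∈ I) (has : a < s) (hsb : s < b) :
    (f b - f s * genCos κ (b - s)) / genSin κ (b - s) ≤
      (f s * genCos κ (s - a) - f a) / genSin κ (s - a) := by
  have hthree := hf.le_of_mem_Ioo a ha b hb s ⟨has, hsb⟩
  have hadd := genSin_add κ (b - s) (s - a)
  rw [sub_add_sub_cancel] at hadd
  rw [hadd] at hthree
  rw [div_le_div_iff₀ (hf.genSin_sub_pos s hs b hb hsb) (hf.genSin_sub_pos a ha s hs has)]
  linarith

theorem exists_support (hf : IsJacobiConcaveOn κ I f) {s : ℝ} (hs : I ∈ 𝓝 s) :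
    ∃ p, ∀ b ∈ I, f b ≤ f s * genCos κ (b - s) + p * genSin κ (b - s) := by
  have hsI : s ∈ I := mem_of_mem_nhds hs
  obtain ⟨a₀, ha₀⟩ : (I ∩ Iio s).Nonempty :=
    (𝓝[<] s).nonempty_of_mem (inter_mem (mem_nhdsWithin_of_mem_nhds hs) self_mem_nhdsWithin)
  obtain ⟨b₀, hb₀⟩ : (I ∩ Ioi s).Nonempty :=
    (𝓝[>] s).nonempty_of_mem (inter_mem (mem_nhdsWithin_of_mem_nhds hs) self_mem_nhdsWithin)
  obtain ⟨p, hright, hleft⟩ := exists_between_of_forall_le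
    (s := (fun b => (f b - f s * genCos κ (b - s)) / genSin κ (b - s)) '' (I ∩ Ioi s))
    (t := (fun a => (f s * genCos κ (s - a) - f a) / genSin κ (s - a)) '' (I ∩ Iio s))
    ⟨_, b₀, hb₀, rfl⟩ ⟨_, a₀, ha₀, rfl⟩ (by
      rintro _ ⟨b, ⟨hb, hsb⟩, rfl⟩ _ ⟨a, ⟨ha, has⟩, rfl⟩
      exact hf.genSin_quotient_le ha hsI hb has hsb)
  refine ⟨p, fun b hb => ?_⟩
  rcases lt_trichotomy b s with hbs | rfl | hsb
  · have hp := hleft ⟨b, ⟨hb, hbs⟩, rfl⟩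
    rw [le_div_iff₀ (hf.genSin_sub_pos b hb s hsI hbs)] at hp
    rw [← neg_sub s b, genCos_neg, genSin_neg]
    linarith
  · simp
  · have hp := hright ⟨b, ⟨hb, hsb⟩, rfl⟩
    rw [div_le_iff₀ (hf.genSin_sub_pos s hsI b hb hsb)] at hp
    linarith

theorem exists_isJacobiSlopeOn (hf : IsJacobiConcaveOn κ I f) (hI : IsOpen I)
    (hpos : ∀ x ∈ I, 0 < f x) : ∃ g, IsJacobiSlopeOn κ f g I := by
  choose! p hp using fun s (hs : s ∈ I) => hf.exists_support (hI.mem_nhds hs)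
  refine ⟨fun s => p s / f s, fun s hs b hb => (hp s hs b hb).trans_eq ?_⟩
  have := (hpos s hs).ne'
  rw [jacobi]
  field_simp

end IsJacobiConcaveOn

namespace IsJacobiSlopeOn

theorem jacobi_pos (hg : IsJacobiSlopeOn κ f g I) (hpos : ∀ x ∈ I, 0 < f x) {s b : ℝ}
    (hs : s ∈ I) (hb : b ∈ I) : 0 < jacobi κ (g s) (b - s) :=
  pos_of_mul_pos_right ((hpos b hb).trans_le (hg s hs b hb)) (hpos s hs).le

theorem isSupergradientOn_log (hg : IsJacobiSlopeOn κ f g I) (hI : I.OrdConnected)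
    (hpos : ∀ x ∈ I, 0 < f x) :
    IsSupergradientOn (fun x => log (f x) + κ / 2 * x ^ 2) (fun x => g x + κ * x) I := by
  intro s hs b hb
  have hJ : ∀ τ ∈ uIcc 0 (b - s), 0 < jacobi κ (g s) τ := by
    intro τ hτ
    have hmem : τ + s ∈ uIcc s b := by
      simpa using (mem_image_of_mem (· + s) hτ)
    simpa using hg.jacobi_pos hpos hs (hI.uIcc_subset hs hb hmem)
  have hlog : log (f b) ≤ log (f s) + log (jacobi κ (g s) (b - s)) := by
    rw [← log_mul (hpos s hs).ne' (hJ _ right_mem_uIcc).ne']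
    exact log_le_log (hpos b hb) (hg s hs b hb)
  linarith [log_jacobi_le hJ]

theorem le_riccati (hg : IsJacobiSlopeOn κ f g I) (hpos : ∀ x ∈ I, 0 < f x) {a b : ℝ}
    (ha : a ∈ I) (hb : b ∈ I) (hS : 0 < genSin κ (b - a)) : g b ≤ riccati κ (g a) (b - a) := by
  have hJ := hg.jacobi_pos hpos ha hb
  refine le_riccati_of_one_le_jacobi_mul_jacobi hS hJ ?_
  rw [neg_sub]
  refine le_of_mul_le_mul_left ?_ (hpos a ha)
  calc f a * 1 ≤ f b * jacobi κ (g b) (a - b) := by simpa using hg b hb a ha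
    _ ≤ f a * jacobi κ (g a) (b - a) * jacobi κ (g b) (a - b) :=
        mul_le_mul_of_nonneg_right (hg a ha b hb) (hg.jacobi_pos hpos hb ha).le
    _ = f a * (jacobi κ (g a) (b - a) * jacobi κ (g b) (a - b)) := mul_assoc _ _ _

theorem deriv_le (hg : IsJacobiSlopeOn κ f g I) (hpos : ∀ x ∈ I, 0 < f x) {s : ℝ} (hs : I ∈ 𝓝 s)
    (hd : DifferentiableAt ℝ g s) : deriv g s ≤ -κ - g s ^ 2 := by
  have hw : HasDerivAt (fun b => riccati κ (g s) (b - s)) (-κ - g s ^ 2) s := by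
    have h₀ : HasDerivAt (riccati κ (g s)) (-κ - g s ^ 2) (s - s) := by
      simpa using hasDerivAt_riccati (κ := κ) (g := g s) (θ := 0) (by simp)
    exact h₀.comp_sub_const s s
  refine le_of_hasDerivAt_of_eventually_le_right hd.hasDerivAt hw (by simp) ?_
  have hsmall : ∀ᶠ b in 𝓝 s, κ * (b - s) ^ 2 < π ^ 2 :=
    ContinuousAt.eventually_lt (by fun_prop) continuousAt_const (by simp [pi_pos])
  filter_upwards [self_mem_nhdsWithin, mem_nhdsWithin_of_mem_nhds (inter_mem hs hsmall)]
    with b hsb hb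
  exact hg.le_riccati hpos (mem_of_mem_nhds hs) hb.1 (genSin_pos (sub_pos.2 hsb) hb.2)

end IsJacobiSlopeOn

end JacobiConcave

/-! ### CD densities -/

theorem sigmaR_eq_genSin_div {K n t θ : ℝ} (hn : 0 < n) (hθ : 0 < θ) :
    sigmaR K n t θ = genSin (K / n) (t * θ) / genSin (K / n) θ := by
  rcases lt_trichotomy K 0 with hK | rfl | hK
  · have hκ : K / n < 0 := div_neg_of_neg_of_pos hK hn
    have hKθ : K * θ ^ 2 < 0 := mul_neg_of_neg_of_pos hK (by positivity)
    have hsqrt : √(-(K / n)) ≠ 0 := (sqrt_pos.2 (neg_pos.2 hκ)).ne'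
    simp only [sigmaR, genSin, hκ, hκ.not_gt, hKθ.not_gt, hKθ.ne, hn.ne', or_self, if_true,
      if_false, neg_div, div_div_div_cancel_right₀ hsqrt, mul_comm √(-(K / n))]
  · simp [sigmaR, genSin, hθ.ne']
  · have hκ : 0 < K / n := div_pos hK hn
    have hKθ : 0 < K * θ ^ 2 := by positivity
    simp only [sigmaR, genSin, hκ, hKθ, if_true, div_div_div_cancel_right₀ (sqrt_pos.2 hκ).ne',
      mul_comm √(K / n)]

namespace IsCDDensity

variable {K N : ℝ} {I : Set ℝ} {h : ℝ → ℝ}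

theorem mul_sub_sq_lt (hcd : IsCDDensity K N I h) (hpos : ∀ x ∈ I, 0 < h x) {a b : ℝ}
    (ha : a ∈ I) (hb : b ∈ I) : K * (b - a) ^ 2 < (N - 1) * π ^ 2 := by
  by_contra! hle
  have hineq := hcd.2 a ha b hb 0 (by simp)
  have hha : 0 < h a ^ (1 / (N - 1)) := rpow_pos_of_pos (hpos a ha) _
  rw [sigmaE, sq_abs, if_pos hle, ENNReal.top_mul (by simpa using hha), top_add] at hineq
  exact ENNReal.ofReal_ne_top (top_le_iff.1 hineq)

theorem sigmaR_mul_add_le (hcd : IsCDDensity K N I h) (hpos : ∀ x ∈ I, 0 < h x)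
    {a b t : ℝ} (ha : a ∈ I) (hb : b ∈ I) (hab : a < b) (ht : t ∈ Icc (0 : ℝ) 1)
    (hx : (1 - t) * a + t * b ∈ I) :
    sigmaR K (N - 1) (1 - t) (b - a) * h a ^ (1 / (N - 1)) +
        sigmaR K (N - 1) t (b - a) * h b ^ (1 / (N - 1)) ≤
      h ((1 - t) * a + t * b) ^ (1 / (N - 1)) := by
  have hineq := hcd.2 a ha b hb t ht
  have hfinite : ¬(N - 1) * π ^ 2 ≤ K * (b - a) ^ 2 := (hcd.mul_sub_sq_lt hpos ha hb).not_ge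
  have hroot (x : ℝ) (hx : x ∈ I) : 0 ≤ h x ^ (1 / (N - 1)) := rpow_nonneg (hpos x hx).le _
  rw [abs_of_pos (sub_pos.2 hab), sigmaE, sigmaE, if_neg hfinite, if_neg hfinite,
    ← ENNReal.ofReal_mul' (hroot a ha), ← ENNReal.ofReal_mul' (hroot b hb)] at hineq
  exact (ENNReal.ofReal_le_ofReal_iff (hroot _ hx)).1 (ENNReal.ofReal_add_le.trans hineq)

theorem isJacobiConcaveOn_rpow (hcd : IsCDDensity K N I h) (hN : 1 < N) (hI : I.OrdConnected)
    (hpos : ∀ x ∈ I, 0 < h x) :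
    IsJacobiConcaveOn (K / (N - 1)) I fun x => h x ^ (1 / (N - 1)) := by
  have hn : 0 < N - 1 := sub_pos.2 hN
  have hsin : ∀ a ∈ I, ∀ b ∈ I, a < b → 0 < genSin (K / (N - 1)) (b - a) := by
    intro a ha b hb hab
    refine genSin_pos (sub_pos.2 hab) ?_
    rw [div_mul_eq_mul_div, div_lt_iff₀ hn, mul_comm (π ^ 2)]
    exact hcd.mul_sub_sq_lt hpos ha hb
  refine ⟨hsin, fun a ha b hb x hx => ?_⟩
  have hab : a < b := hx.1.trans hx.2
  have hd : 0 < b - a := sub_pos.2 hab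
  set t := (x - a) / (b - a)
  have ht_mem : t ∈ Icc (0 : ℝ) 1 :=
    ⟨div_nonneg (by linarith [hx.1]) hd.le, (div_le_one hd).2 (by linarith [hx.2])⟩
  have ht_mul : t * (b - a) = x - a := div_mul_cancel₀ _ hd.ne'
  have hxt : (1 - t) * a + t * b = x := by linarith
  have hineq := hcd.sigmaR_mul_add_le hpos ha hb hab ht_mem
    (hxt ▸ hI.out ha hb (Ioo_subset_Icc_self hx))
  rw [hxt, sigmaR_eq_genSin_div hn hd, sigmaR_eq_genSin_div hn hd, ht_mul,
    show (1 - t) * (b - a) = b - x by linarith, div_mul_eq_mul_div, div_mul_eq_mul_div,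
    ← add_div, div_le_iff₀ (hsin a ha b hb hab)] at hineq
  linarith

theorem exists_riccati_supergradient (hcd : IsCDDensity K N I h) (hN : 1 < N) (hI : IsOpen I)
    (hIc : I.OrdConnected) (hpos : ∀ x ∈ I, 0 < h x) :
    ∃ ρ : ℝ → ℝ,
      IsSupergradientOn (fun x => log (h x) + K / 2 * x ^ 2) (fun x => ρ x + K * x) I ∧
      ∀ s ∈ I, DifferentiableAt ℝ ρ s → deriv ρ s ≤ -K - 1 / (N - 1) * ρ s ^ 2 := by
  have hn : 0 < N - 1 := sub_pos.2 hN
  have hroot_pos : ∀ x ∈ I, 0 < h x ^ (1 / (N - 1)) := fun x hx => rpow_pos_of_pos (hpos x hx) _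
  have hroot := hcd.isJacobiConcaveOn_rpow hN hIc hpos
  obtain ⟨g, hg⟩ := hroot.exists_isJacobiSlopeOn hI hroot_pos
  refine ⟨fun x => (N - 1) * g x, ?_, fun s hs hd => ?_⟩
  · intro s hs b hb
    have hscaled := (hg.isSupergradientOn_log hIc hroot_pos).const_mul hn.le s hs b hb
    simp only [log_rpow (hpos s hs), log_rpow (hpos b hb)] at hscaled
    field_simp at hscaled ⊢
    linarith
  · have hdg : DifferentiableAt ℝ g s := by simpa [hn.ne'] using hd.const_mul (N - 1)⁻¹
    have hle := mul_le_mul_of_nonneg_left (hg.deriv_le hroot_pos (hI.mem_nhds hs) hdg) hn.le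
    rw [deriv_const_mul_field]
    refine hle.trans_eq ?_
    field_simp

end IsCDDensity

theorem hasDerivAt_log_add_quadratic {h : ℝ → ℝ} {x : ℝ} (K : ℝ) (hx : h x ≠ 0)
    (hd : DifferentiableAt ℝ h x) :
    HasDerivAt (fun x => log (h x) + K / 2 * x ^ 2) (deriv h x / h x + K * x) x :=
  (hd.hasDerivAt.log hx).fun_add (hasDerivAt_half_mul_sq K x)

theorem differentiableAt_of_log_add_quadratic {h : ℝ → ℝ} {x K : ℝ} (hpos : ∀ᶠ z in 𝓝 x, 0 < h z)
    (hd : DifferentiableAt ℝ (fun x => log (h x) + K / 2 * x ^ 2) x) :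
    DifferentiableAt ℝ h x := by
  have hquad : DifferentiableAt ℝ (fun x => K / 2 * x ^ 2) x := by fun_prop
  have hlog : DifferentiableAt ℝ (fun x => log (h x)) x := by simpa using hd.fun_sub hquad
  refine hlog.exp.congr_of_eventuallyEq ?_
  filter_upwards [hpos] with z hz
  exact (exp_log hz).symm

theorem cd_density_integrated_riccati (K N : ℝ) (hN : 1 < N)
    (I : Set ℝ) (hIopen : IsOpen I) (hIconn : I.OrdConnected)
    (h : ℝ → ℝ) (hpos : ∀ x ∈ I, 0 < h x) (hcd : IsCDDensity K N I h) :
    (I \ {x | DifferentiableAt ℝ h x}).Countable ∧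
    ∀ x ∈ I, ∀ y ∈ I, DifferentiableAt ℝ h x → DifferentiableAt ℝ h y → x < y →
      IntervalIntegrable (fun s => (deriv h s / h s) ^ 2) volume x y ∧
      K * (y - x) + (1 / (N - 1)) * ∫ s in x..y, (deriv h s / h s) ^ 2
        ≤ deriv h x / h x - deriv h y / h y := by
  obtain ⟨ρ, hρ, hderiv⟩ := hcd.exists_riccati_supergradient hN hIopen hIconn hpos
  have hcountable : (I \ {x | DifferentiableAt ℝ h x}).Countable := by
    refine (hρ.countable_not_differentiableAt hIopen).mono ?_
    rintro x ⟨hx, hnd⟩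
    exact ⟨hx, fun hd => hnd
      (differentiableAt_of_log_add_quadratic ((hIopen.eventually_mem hx).mono hpos) hd)⟩
  have hlogDeriv : ∀ s ∈ I, DifferentiableAt ℝ h s → deriv h s / h s = ρ s := fun s hs hd =>
    add_right_cancel <| hρ.eq_of_hasDerivAt (hIopen.mem_nhds hs)
      (hasDerivAt_log_add_quadratic K (hpos s hs).ne' hd)
  refine ⟨hcountable, fun x hx y hy hdx hdy hxy => ?_⟩
  have hsub : Icc x y ⊆ I := hIconn.out hx hy
  obtain ⟨hint, hle⟩ := integrated_riccati_of_deriv_le (one_div_pos.2 (sub_pos.2 hN)) hxy.le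
    (hρ.antitoneOn.mono hsub) fun s hs => hderiv s (hsub (Ioo_subset_Icc_self hs))
  have hae : ∀ᵐ s, s ∈ uIoc x y → ρ s ^ 2 = (deriv h s / h s) ^ 2 := by
    filter_upwards [hcountable.ae_notMem volume] with s hs hsxy
    have hsI : s ∈ I := hsub (Ioc_subset_Icc_self (uIoc_of_le hxy.le ▸ hsxy))
    rw [hlogDeriv s hsI (by simpa [hsI] using hs)]
  rw [hlogDeriv x hx hdx, hlogDeriv y hy hdy, ← intervalIntegral.integral_congr_ae hae]
  exact ⟨hint.congr_ae ((ae_restrict_iff' measurableSet_uIoc).2 hae), hle⟩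
end

section
/- For every N ∈ (1,∞), the function t ↦ |1 + (N−1)·t·(cos t / sin t)|·(sin t)^{N−1} is Lebesgue integrable on the interval (0, π); in particular, for every ε ∈ (0,π), ∫_{π−ε}^{π} |1 + (N−1)·t·cot t|·(sin t)^{N−1} dt < ∞. -/
open MeasureTheory Real

/-!
Multiplying the modulus by `sin t` clears the cotangent: on `(0, π)` the integrand equals
`|sin t + (N - 1) t cos t| * sin t ^ (N - 2)`, a continuous function times a power of the sine with
exponent greater than `-1`. Such a power is integrable because `sin t = sinc t * t` with `sinc`
continuous and positive on `[0, π)`, which compares it with `t ^ (N - 2)` near `0`; the reflection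
`t ↦ π - t` handles the other endpoint.
-/

theorem sinc_pos_of_abs_lt_pi {x : ℝ} (hx : |x| < π) : 0 < sinc x := by
  wlog hx_nonneg : 0 ≤ x generalizing x
  · rw [← sinc_neg]
    exact this (by rwa [abs_neg]) (by linarith)
  rcases hx_nonneg.eq_or_lt with rfl | hx_pos
  · rw [sinc_zero]
    exact one_pos
  · rw [sinc_of_ne_zero hx_pos.ne']
    exact div_pos (sin_pos_of_pos_of_lt_pi hx_pos (lt_of_abs_lt hx)) hx_pos

theorem sinc_rpow_mul_rpow {x : ℝ} (hx_nonneg : 0 ≤ x) (hx : x < π) (q : ℝ) :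
    sinc x ^ q * x ^ q = sin x ^ q := by
  have hsinc : 0 < sinc x := sinc_pos_of_abs_lt_pi (by rwa [abs_of_nonneg hx_nonneg])
  rw [← mul_rpow hsinc.le hx_nonneg]
  rcases hx_nonneg.eq_or_lt with rfl | hx_pos
  · rw [mul_zero, sin_zero]
  · rw [sinc_of_ne_zero hx_pos.ne', div_mul_cancel₀ _ hx_pos.ne']

theorem intervalIntegrable_sin_rpow_of_lt_pi {q b : ℝ} (hq : -1 < q) (hb_nonneg : 0 ≤ b)
    (hb : b < π) :
    IntervalIntegrable (fun t => sin t ^ q) volume 0 b := by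
  have hsinc : ContinuousOn (fun t => sinc t ^ q) (Set.uIcc 0 b) := by
    refine continuous_sinc.continuousOn.rpow_const fun t ht => Or.inl ?_
    rw [Set.uIcc_of_le hb_nonneg] at ht
    exact (sinc_pos_of_abs_lt_pi (by rw [abs_of_nonneg ht.1]; exact ht.2.trans_lt hb)).ne'
  refine ((intervalIntegral.intervalIntegrable_rpow' hq).continuousOn_mul hsinc).congr ?_
  intro t ht
  rw [Set.uIoc_of_le hb_nonneg] at ht
  exact sinc_rpow_mul_rpow ht.1.le (ht.2.trans_lt hb) q

theorem intervalIntegrable_sin_rpow_zero_pi {q : ℝ} (hq : -1 < q) :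
    IntervalIntegrable (fun t => sin t ^ q) volume 0 π := by
  have hleft : IntervalIntegrable (fun t => sin t ^ q) volume 0 (π / 2) :=
    intervalIntegrable_sin_rpow_of_lt_pi hq (by positivity) (half_lt_self pi_pos)
  have hright : IntervalIntegrable (fun t => sin t ^ q) volume π (π / 2) := by
    simpa only [sin_pi_sub, sub_zero, sub_half] using hleft.comp_sub_left π
  exact hleft.trans hright.symm

theorem abs_one_add_mul_div_mul_rpow {s : ℝ} (hs : 0 < s) (a c p : ℝ) :
    |1 + a * (c / s)| * s ^ p = |s + a * c| * s ^ (p - 1) := by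
  have hfactor : s + a * c = (1 + a * (c / s)) * s := by field_simp
  rw [hfactor, abs_mul, abs_of_pos hs, rpow_sub_one hs.ne', mul_assoc, mul_div_cancel₀ _ hs.ne']

theorem integrable_sine_cotangent (N : ℝ) (hN : 1 < N) :
    IntegrableOn
      (fun t => |1 + (N - 1) * t * (Real.cos t / Real.sin t)| * Real.sin t ^ (N - 1))
      (Set.Ioo 0 Real.pi) volume ∧
    ∀ ε : ℝ, 0 < ε → ε < Real.pi →
      IntegrableOn
        (fun t => |1 + (N - 1) * t * (Real.cos t / Real.sin t)| * Real.sin t ^ (N - 1))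
        (Set.Ioo (Real.pi - ε) Real.pi) volume := by
  have hweight : Continuous fun t : ℝ => |sin t + (N - 1) * t * cos t| := by fun_prop
  have hcleared : IntegrableOn
      (fun t => |sin t + (N - 1) * t * cos t| * sin t ^ (N - 1 - 1)) (Set.Ioo 0 π) volume :=
    (intervalIntegrable_iff_integrableOn_Ioo_of_le pi_pos.le).mp <|
      (intervalIntegrable_sin_rpow_zero_pi (by linarith)).continuousOn_mul hweight.continuousOn
  have hmain : IntegrableOn
      (fun t => |1 + (N - 1) * t * (cos t / sin t)| * sin t ^ (N - 1)) (Set.Ioo 0 π) volume :=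
    hcleared.congr_fun
      (fun _ ht => (abs_one_add_mul_div_mul_rpow (sin_pos_of_mem_Ioo ht) _ _ _).symm)
      measurableSet_Ioo
  exact ⟨hmain, fun ε _ hε => hmain.mono_set (Set.Ioo_subset_Ioo_left (sub_nonneg.mpr hε.le))⟩
end
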